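/- (Self-improving property of reverse Hölder inequalities.) Let n ≥ 2, let A ⊆ ℝ^{n+1} be open, let χ₁ > 1 and ĉ ≥ 1, and let g be a measurable function on A with |g|^{2χ₁} locally integrable, such that ( ⨍_{Q_{ρ/2}} |g|^{2χ₁} dx dt )^{1/χ₁} ≤ ĉ ⨍_{Q_ρ} |g|² dx dt holds for every parabolic cylinder Q_ρ with Q_ρ ⊆ A, where Q_{ρ/2} is concentric with Q_ρ. Then, for every σ ∈ (0,2], there exists a constant c depending only on n, σ, χ₁ and ĉ such that ( ⨍_{Q_{ρ/2}} |g|^{2χ₁} dx dt )^{1/(2χ₁)} ≤ c ( ⨍_{Q_ρ} |g|^σ dx dt )^{1/σ} for every parabolic cylinder Q_ρ with Q_ρ ⊆ A. -/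

import Mathlib

open MeasureTheory Set ENNReal

/-- The (backward) parabolic cylinder `Q_R(x₀,t₀) = B(x₀,R) × (t₀ - R², t₀) ⊆ ℝⁿ × ℝ`. -/
def parabolicCylinder (n : ℕ) (x₀ : EuclideanSpace ℝ (Fin n)) (t₀ R : ℝ) :
    Set (EuclideanSpace ℝ (Fin n) × ℝ) :=
  (Metric.ball x₀ R) ×ˢ (Set.Ioo (t₀ - R ^ 2) t₀)

/-- The integral average `⨍_Q |g|^e` (as an extended nonnegative real) of `|g|^e` over `Q`. -/
noncomputable def cylAvg {n : ℕ} (Q : Set (EuclideanSpace ℝ (Fin n) × ℝ))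
    (g : EuclideanSpace ℝ (Fin n) × ℝ → ℝ) (e : ℝ) : ℝ≥0∞ :=
  (volume Q)⁻¹ * ∫⁻ p in Q, ENNReal.ofReal (|g p| ^ e)

lemma pc_vol (n : ℕ) (hn : 2 ≤ n) (x : EuclideanSpace ℝ (Fin n)) (t r : ℝ) (hr : 0 < r) :
    volume (parabolicCylinder n x t r) =
      ENNReal.ofReal (r ^ (n + 2)) * volume (Metric.ball (0 : EuclideanSpace ℝ (Fin n)) 1) := by
  have : Nontrivial (EuclideanSpace ℝ (Fin n)) := by
    have : Nonempty (Fin n) := ⟨⟨0, by omega⟩⟩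
    infer_instance
  unfold parabolicCylinder
  rw [Measure.volume_eq_prod, Measure.prod_prod, Measure.addHaar_ball _ _ hr.le, Real.volume_Ioo,
    finrank_euclideanSpace_fin, pow_add, ENNReal.ofReal_mul (by positivity)]
  rw [_root_.sub_sub_cancel]
  ring

lemma pc_vol_ne_zero (n : ℕ) (hn : 2 ≤ n) (x : EuclideanSpace ℝ (Fin n)) (t r : ℝ) (hr : 0 < r) :
    volume (parabolicCylinder n x t r) ≠ 0 := by
  rw [pc_vol n hn x t r hr]
  refine mul_ne_zero ?_ (Metric.measure_ball_pos _ _ one_pos).ne'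
  simp only [ne_eq, ENNReal.ofReal_eq_zero, not_le]
  positivity

lemma pc_vol_ne_top (n : ℕ) (hn : 2 ≤ n) (x : EuclideanSpace ℝ (Fin n)) (t r : ℝ) (hr : 0 < r) :
    volume (parabolicCylinder n x t r) ≠ ∞ := by
  rw [pc_vol n hn x t r hr]
  exact ENNReal.mul_ne_top ENNReal.ofReal_ne_top measure_ball_lt_top.ne

lemma pc_vol_scale (n : ℕ) (hn : 2 ≤ n) (x y : EuclideanSpace ℝ (Fin n)) (t s r k : ℝ)
    (hr : 0 < r) (hk : 0 < k) :
    volume (parabolicCylinder n x t r) =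
      ENNReal.ofReal (k ^ (n + 2)) * volume (parabolicCylinder n y s (r / k)) := by
  rw [pc_vol n hn x t r hr, pc_vol n hn y s (r / k) (by positivity), ← mul_assoc,
    ← ENNReal.ofReal_mul (by positivity), ← mul_pow, mul_div_cancel₀ _ (ne_of_gt hk)]

/-- Inclusion of cylinders. -/
lemma pc_subset (n : ℕ) (x y : EuclideanSpace ℝ (Fin n)) (t s r R : ℝ)
    (h1 : dist y x + r ≤ R) (h2 : s ≤ t) (h3 : t - R ^ 2 ≤ s - r ^ 2) :
    parabolicCylinder n y s r ⊆ parabolicCylinder n x t R := by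
  apply Set.prod_mono
  · exact Metric.ball_subset_ball' (by linarith)
  · exact Set.Ioo_subset_Ioo h3 h2

/-- Finite covering of the half cylinder. -/
lemma pc_cover (n : ℕ) : ∃ F : Finset (EuclideanSpace ℝ (Fin n) × ℝ),
    ∀ (x : EuclideanSpace ℝ (Fin n)) (t r : ℝ), 0 < r →
      (parabolicCylinder n x t (r / 2) ⊆
        ⋃ z : F, parabolicCylinder n (x + r • z.1.1) (t - r ^ 2 * z.1.2) (r / 8)) ∧
      ∀ z : F, parabolicCylinder n (x + r • z.1.1) (t - r ^ 2 * z.1.2) (r / 2) ⊆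
        parabolicCylinder n x t r := by
  classical
  have htb : TotallyBounded (Metric.ball (0 : EuclideanSpace ℝ (Fin n)) (1 / 2)) :=
    (isCompact_closedBall (0 : EuclideanSpace ℝ (Fin n)) (1 / 2)).totallyBounded.subset
      Metric.ball_subset_closedBall
  obtain ⟨S, hS1, hS2, hS3⟩ := Metric.finite_approx_of_totallyBounded htb (1 / 8) (by norm_num)
  refine ⟨hS2.toFinset ×ˢ ((Finset.range 32).image (fun j : ℕ => (j : ℝ) / 128)), ?_⟩
  intro x t r hr
  constructor
  · rintro ⟨y, τ⟩ ⟨hy, hτ⟩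
    simp only [Metric.mem_ball, mem_Ioo] at hy hτ
    have hy' : r⁻¹ • (y - x) ∈ Metric.ball (0 : EuclideanSpace ℝ (Fin n)) (1 / 2) := by
      rw [mem_ball_zero_iff, norm_smul, norm_inv, Real.norm_of_nonneg hr.le, ← dist_eq_norm]
      rw [inv_mul_lt_iff₀ hr]; linarith
    have := hS3 hy'
    simp only [mem_iUnion] at this
    obtain ⟨s, hs, hsy⟩ := this
    set u : ℝ := (t - τ) * 128 / r ^ 2 with hu
    have hr2 : 0 < r ^ 2 := by positivity
    have hu0 : 0 < u := by
      apply div_pos _ hr2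
      linarith [hτ.2]
    have hu32 : u < 32 := by
      rw [hu, div_lt_iff₀ hr2]
      nlinarith [hτ.1]
    have hur : u * r ^ 2 = (t - τ) * 128 := by rw [hu]; field_simp
    have hc0 : 0 < ⌈u⌉₊ := Nat.ceil_pos.2 hu0
    obtain ⟨j, hj⟩ : ∃ j, ⌈u⌉₊ = j + 1 := ⟨⌈u⌉₊ - 1, by omega⟩
    have hj1 : (j : ℝ) < u := by
      apply Nat.lt_ceil.1; omega
    have hj2 : u ≤ j + 1 := by
      have := Nat.le_ceil u
      rw [hj] at this; push_cast at this; exact this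
    have hj3 : j < 32 := by
      have : (j : ℝ) < 32 := by linarith
      exact_mod_cast this
    simp only [mem_iUnion]
    refine ⟨⟨(s, (j : ℝ) / 128), ?_⟩, ?_, ?_⟩
    · simp only [Finset.mem_product, Set.Finite.mem_toFinset, Finset.mem_image, Finset.mem_range]
      exact ⟨hs, j, hj3, rfl⟩
    · simp only [Metric.mem_ball]
      rw [Metric.mem_ball, dist_eq_norm] at hsy
      have e : y - (x + r • s) = r • (r⁻¹ • (y - x) - s) := by
        rw [smul_sub, smul_smul, mul_inv_cancel₀ hr.ne', one_smul]; abel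
      rw [dist_eq_norm, e, norm_smul, Real.norm_of_nonneg hr.le]
      have := mul_lt_mul_of_pos_left hsy hr
      linarith
    · simp only [mem_Ioo]
      constructor <;> nlinarith
  · rintro ⟨⟨s, a⟩, hz⟩
    simp only [Finset.mem_product, Set.Finite.mem_toFinset, Finset.mem_image, Finset.mem_range]
      at hz
    obtain ⟨hs, j, hj, rfl⟩ := hz
    have hs' := hS1 hs
    rw [mem_ball_zero_iff] at hs'
    have hj' : (j : ℝ) ≤ 32 := by exact_mod_cast hj.le
    have hj0 : (0 : ℝ) ≤ j := by positivity
    have hr2 : 0 < r ^ 2 := by positivity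
    apply pc_subset
    · simp only [dist_self_add_left, norm_smul, Real.norm_of_nonneg hr.le]
      nlinarith
    · have : 0 ≤ r ^ 2 * (j / 128) := by positivity
      simp only; linarith
    · simp only; nlinarith

lemma cylAvg_eq {n : ℕ} (Q : Set (EuclideanSpace ℝ (Fin n) × ℝ))
    (g : EuclideanSpace ℝ (Fin n) × ℝ → ℝ) (e : ℝ) (he : 0 ≤ e) :
    cylAvg Q g e = ∫⁻ p, ENNReal.ofReal |g p| ^ e ∂((volume Q)⁻¹ • volume.restrict Q) := by
  unfold cylAvg
  rw [lintegral_smul_measure, smul_eq_mul]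
  congr 1
  apply lintegral_congr
  intro p
  rw [ENNReal.ofReal_rpow_of_nonneg (abs_nonneg _) he]

/-- Interpolation. -/
lemma cylAvg_interp {n : ℕ} (Q : Set (EuclideanSpace ℝ (Fin n) × ℝ))
    (g : EuclideanSpace ℝ (Fin n) × ℝ → ℝ) (hg : Measurable g) (σ τ e p q : ℝ) (hσ : 0 ≤ σ)
    (hτ : 0 ≤ τ) (hp : 0 ≤ p) (hq : 0 ≤ q) (hpq : p + q = 1) (he : e = σ * p + τ * q) :
    cylAvg Q g e ≤ cylAvg Q g σ ^ p * cylAvg Q g τ ^ q := by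
  have he0 : 0 ≤ e := by rw [he]; positivity
  rw [cylAvg_eq Q g e he0, cylAvg_eq Q g σ hσ, cylAvg_eq Q g τ hτ]
  refine le_trans (le_of_eq ?_) (ENNReal.lintegral_mul_norm_pow_le ?_ ?_ hp hq hpq)
  · apply lintegral_congr
    intro x
    rw [← ENNReal.rpow_mul, ← ENNReal.rpow_mul, he,
      ENNReal.rpow_add_of_nonneg _ _ (by positivity) (by positivity)]
  · fun_prop
  · fun_prop

lemma vol_mul_cylAvg {n : ℕ} (Q : Set (EuclideanSpace ℝ (Fin n) × ℝ))
    (g : EuclideanSpace ℝ (Fin n) × ℝ → ℝ) (e : ℝ) (h0 : volume Q ≠ 0) (h1 : volume Q ≠ ∞) :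
    volume Q * cylAvg Q g e = ∫⁻ p in Q, ENNReal.ofReal (|g p| ^ e) := by
  unfold cylAvg
  rw [← mul_assoc, ENNReal.mul_inv_cancel h0 h1, one_mul]

/-- Absorption. -/
lemma absorb (Ψ C I : ℝ≥0∞) (a b : ℝ) (ha1 : a < 1) (hΨ : Ψ ≠ ∞)
    (h : Ψ ≤ C * I ^ b * Ψ ^ a) : Ψ ≤ C ^ (1 / (1 - a)) * I ^ (b / (1 - a)) := by
  rcases eq_or_ne Ψ 0 with h0 | h0
  · simp [h0]
  have h1a : 0 < 1 - a := by linarith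
  have h2 : Ψ ^ (1 - a) ≤ C * I ^ b := by
    rw [ENNReal.rpow_sub _ _ h0 hΨ, ENNReal.rpow_one]
    exact ENNReal.div_le_of_le_mul h
  have h3 := ENNReal.rpow_le_rpow h2 (z := 1 / (1 - a)) (by positivity)
  rw [← ENNReal.rpow_mul, mul_one_div_cancel h1a.ne', ENNReal.rpow_one,
    ENNReal.mul_rpow_of_nonneg _ _ (by positivity), ← ENNReal.rpow_mul, mul_one_div] at h3
  exact h3

/-- Key step: a bound by the interpolation of the `σ`-integral and a uniform bound `Ψ`. -/
lemma key_step (n : ℕ) (hn : 2 ≤ n) (χ₁ cHat σ p q : ℝ) (hχ : 1 < χ₁) (hσ0 : 0 < σ)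
    (hp : 0 ≤ p) (hq : 0 ≤ q) (hpq : p + q = 1) (he : 2 = σ * p + 2 * χ₁ * q)
    (F : Finset (EuclideanSpace ℝ (Fin n) × ℝ))
    (hF : ∀ (x : EuclideanSpace ℝ (Fin n)) (t r : ℝ), 0 < r →
      (parabolicCylinder n x t (r / 2) ⊆
        ⋃ z : F, parabolicCylinder n (x + r • z.1.1) (t - r ^ 2 * z.1.2) (r / 8)) ∧
      ∀ z : F, parabolicCylinder n (x + r • z.1.1) (t - r ^ 2 * z.1.2) (r / 2) ⊆
        parabolicCylinder n x t r)
    (Q : Set (EuclideanSpace ℝ (Fin n) × ℝ))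
    (g : EuclideanSpace ℝ (Fin n) × ℝ → ℝ) (hg : Measurable g)
    (hyp : ∀ (x : EuclideanSpace ℝ (Fin n)) (t ρ : ℝ), 0 < ρ →
          parabolicCylinder n x t ρ ⊆ Q →
            cylAvg (parabolicCylinder n x t (ρ / 2)) g (2 * χ₁) ^ (1 / χ₁) ≤
              ENNReal.ofReal cHat * cylAvg (parabolicCylinder n x t ρ) g 2)
    (Ψ : ℝ≥0∞)
    (hΨ : ∀ (x : EuclideanSpace ℝ (Fin n)) (t r : ℝ), 0 < r → parabolicCylinder n x t r ⊆ Q →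
      volume (parabolicCylinder n x t r) ^ (2 * χ₁ / σ) *
        cylAvg (parabolicCylinder n x t (r / 2)) g (2 * χ₁) ≤ Ψ)
    (x : EuclideanSpace ℝ (Fin n)) (t r : ℝ) (hr : 0 < r) (hQ : parabolicCylinder n x t r ⊆ Q) :
    volume (parabolicCylinder n x t r) ^ (2 * χ₁ / σ) *
        cylAvg (parabolicCylinder n x t (r / 2)) g (2 * χ₁) ≤
      (F.card * (ENNReal.ofReal cHat ^ χ₁ * ENNReal.ofReal (4 ^ (n + 2)) ^ (p * χ₁) *
        (ENNReal.ofReal (2 ^ (n + 2)) ^ (2 * χ₁ / σ)) ^ (q * χ₁))) *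
        (∫⁻ y in Q, ENNReal.ofReal (|g y| ^ σ)) ^ (p * χ₁) * Ψ ^ (q * χ₁) := by
  obtain ⟨hc1, hc2⟩ := hF x t r hr
  set m := volume (parabolicCylinder n x t r) with hm
  have hχ0 : 0 < χ₁ := by linarith
  -- covering
  have h1 : cylAvg (parabolicCylinder n x t (r / 2)) g (2 * χ₁) ≤
      ∑ z : F, cylAvg (parabolicCylinder n (x + r • z.1.1) (t - r ^ 2 * z.1.2) (r / 8)) g
        (2 * χ₁) := by
    unfold cylAvg
    calc _ ≤ (volume (parabolicCylinder n x t (r / 2)))⁻¹ *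
          ∑' z : F, ∫⁻ y in parabolicCylinder n (x + r • z.1.1) (t - r ^ 2 * z.1.2) (r / 8),
            ENNReal.ofReal (|g y| ^ (2 * χ₁)) := by
          gcongr
          exact (lintegral_mono_set hc1).trans (lintegral_iUnion_le _ _)
      _ ≤ _ := by
          rw [tsum_fintype, Finset.mul_sum]
          refine Finset.sum_le_sum fun z _ => ?_
          refine mul_le_mul' (ENNReal.inv_le_inv.2 ?_) le_rfl
          rw [pc_vol n hn _ _ (r / 2) (by positivity), pc_vol n hn _ _ (r / 8) (by positivity)]
          gcongr
          norm_num
  -- each piece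
  have h2 : ∀ z : F, m ^ (2 * χ₁ / σ) *
      cylAvg (parabolicCylinder n (x + r • z.1.1) (t - r ^ 2 * z.1.2) (r / 8)) g (2 * χ₁) ≤
      (ENNReal.ofReal cHat ^ χ₁ * ENNReal.ofReal (4 ^ (n + 2)) ^ (p * χ₁) *
        (ENNReal.ofReal (2 ^ (n + 2)) ^ (2 * χ₁ / σ)) ^ (q * χ₁)) *
        (∫⁻ y in Q, ENNReal.ofReal (|g y| ^ σ)) ^ (p * χ₁) * Ψ ^ (q * χ₁) := by
    intro z
    have hz := (hc2 z).trans hQ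
    set y := x + r • z.1.1 with hy
    set s := t - r ^ 2 * z.1.2 with hs
    have hsub4 : parabolicCylinder n y s (r / 4) ⊆ Q :=
      (pc_subset n y y s s (r / 4) (r / 2) (by rw [dist_self]; linarith) le_rfl
        (by nlinarith)).trans hz
    have a1 := hyp y s (r / 4) (by positivity) hsub4
    have a2 : cylAvg (parabolicCylinder n y s (r / 8)) g (2 * χ₁) ≤
        (ENNReal.ofReal cHat * cylAvg (parabolicCylinder n y s (r / 4)) g 2) ^ χ₁ := by
      rw [one_div, ENNReal.rpow_inv_le_iff hχ0] at a1
      convert a1 using 3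
      ring
    have a3 := cylAvg_interp (parabolicCylinder n y s (r / 4)) g hg σ (2 * χ₁) 2 p q hσ0.le
      (by positivity) hp hq hpq he
    set X := cylAvg (parabolicCylinder n y s (r / 4)) g σ with hX
    set Y := cylAvg (parabolicCylinder n y s (r / 4)) g (2 * χ₁) with hY
    have a4 : m * X ≤ ENNReal.ofReal (4 ^ (n + 2)) * ∫⁻ y in Q, ENNReal.ofReal (|g y| ^ σ) := by
      rw [hm, pc_vol_scale n hn x y t s r 4 hr (by norm_num), mul_assoc,
        vol_mul_cylAvg _ _ _ (pc_vol_ne_zero n hn y s (r / 4) (by positivity))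
          (pc_vol_ne_top n hn y s (r / 4) (by positivity))]
      gcongr
    have a5 : m ^ (2 * χ₁ / σ) * Y ≤ ENNReal.ofReal (2 ^ (n + 2)) ^ (2 * χ₁ / σ) * Ψ := by
      have := hΨ y s (r / 2) (by positivity) hz
      rw [show r / 2 / 2 = r / 4 by ring] at this
      rw [hm, pc_vol_scale n hn x y t s r 2 hr (by norm_num),
        ENNReal.mul_rpow_of_nonneg _ _ (by positivity), mul_assoc]
      gcongr
    have a6 : m ^ (2 * χ₁ / σ) = m ^ (p * χ₁) * (m ^ (2 * χ₁ / σ)) ^ (q * χ₁) := by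
      rw [← ENNReal.rpow_mul, ← ENNReal.rpow_add_of_nonneg _ _ (by positivity) (by positivity)]
      congr 1
      field_simp
      linear_combination he
    calc m ^ (2 * χ₁ / σ) * cylAvg (parabolicCylinder n y s (r / 8)) g (2 * χ₁)
        ≤ m ^ (2 * χ₁ / σ) * (ENNReal.ofReal cHat * (X ^ p * Y ^ q)) ^ χ₁ := by
          gcongr
          refine a2.trans ?_
          gcongr
      _ = ENNReal.ofReal cHat ^ χ₁ * (m * X) ^ (p * χ₁) *
            (m ^ (2 * χ₁ / σ) * Y) ^ (q * χ₁) := by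
          rw [ENNReal.mul_rpow_of_nonneg _ _ hχ0.le, ENNReal.mul_rpow_of_nonneg _ _ hχ0.le,
            ← ENNReal.rpow_mul, ← ENNReal.rpow_mul,
            ENNReal.mul_rpow_of_nonneg m X (by positivity),
            ENNReal.mul_rpow_of_nonneg _ Y (by positivity)]
          conv_lhs => rw [a6]
          ring
      _ ≤ ENNReal.ofReal cHat ^ χ₁ *
            (ENNReal.ofReal (4 ^ (n + 2)) * ∫⁻ y in Q, ENNReal.ofReal (|g y| ^ σ)) ^ (p * χ₁) *
            (ENNReal.ofReal (2 ^ (n + 2)) ^ (2 * χ₁ / σ) * Ψ) ^ (q * χ₁) := by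
          gcongr
      _ = _ := by
          rw [ENNReal.mul_rpow_of_nonneg _ _ (by positivity : 0 ≤ p * χ₁),
            ENNReal.mul_rpow_of_nonneg _ _ (by positivity : 0 ≤ q * χ₁)]
          ring
  calc _ ≤ m ^ (2 * χ₁ / σ) * ∑ z : F,
        cylAvg (parabolicCylinder n (x + r • z.1.1) (t - r ^ 2 * z.1.2) (r / 8)) g (2 * χ₁) := by
        gcongr
    _ ≤ _ := by
        rw [Finset.mul_sum]
        refine (Finset.sum_le_sum fun z _ => h2 z).trans (le_of_eq ?_)
        rw [Finset.sum_const, Finset.card_univ, Fintype.card_coe, nsmul_eq_mul]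
        ring

lemma core (n : ℕ) (hn : 2 ≤ n) (χ₁ cHat σ : ℝ) (hχ : 1 < χ₁) (hσ0 : 0 < σ) (hσ2 : σ ≤ 2) :
    ∃ K : ℝ≥0∞, K ≠ ∞ ∧ ∀ g : EuclideanSpace ℝ (Fin n) × ℝ → ℝ, Measurable g →
      ∀ (x : EuclideanSpace ℝ (Fin n)) (t ρ : ℝ), 0 < ρ →
      (∀ (y : EuclideanSpace ℝ (Fin n)) (s r : ℝ), 0 < r →
          parabolicCylinder n y s r ⊆ parabolicCylinder n x t ρ →
            cylAvg (parabolicCylinder n y s (r / 2)) g (2 * χ₁) ^ (1 / χ₁) ≤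
              ENNReal.ofReal cHat * cylAvg (parabolicCylinder n y s r) g 2) →
      ∫⁻ y in parabolicCylinder n x t ρ, ENNReal.ofReal (|g y| ^ (2 * χ₁)) ≠ ∞ →
      volume (parabolicCylinder n x t ρ) ^ (2 * χ₁ / σ) *
        cylAvg (parabolicCylinder n x t (ρ / 2)) g (2 * χ₁) ≤
      K * (∫⁻ y in parabolicCylinder n x t ρ, ENNReal.ofReal (|g y| ^ σ)) ^ (2 * χ₁ / σ) := by
  obtain ⟨F, hF⟩ := pc_cover n
  have hd : 0 < 2 * χ₁ - σ := by linarith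
  have hχ0 : 0 < χ₁ := by linarith
  have hχ1 : 0 < χ₁ - 1 := by linarith
  set p := (2 * χ₁ - 2) / (2 * χ₁ - σ) with hp
  set q := (2 - σ) / (2 * χ₁ - σ) with hq
  have hp0 : 0 ≤ p := div_nonneg (by linarith) hd.le
  have hq0 : 0 ≤ q := div_nonneg (by linarith) hd.le
  have hpq : p + q = 1 := by rw [hp, hq]; field_simp; ring
  have he : 2 = σ * p + 2 * χ₁ * q := by rw [hp, hq]; field_simp; ring
  have h1a : 1 - q * χ₁ = σ * (χ₁ - 1) / (2 * χ₁ - σ) := by rw [hq]; field_simp; ring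
  have h1a0 : 0 < 1 - q * χ₁ := by rw [h1a]; positivity
  have hexp : p * χ₁ / (1 - q * χ₁) = 2 * χ₁ / σ := by
    rw [h1a, hp]; field_simp
  refine ⟨(F.card * (ENNReal.ofReal cHat ^ χ₁ * ENNReal.ofReal (4 ^ (n + 2)) ^ (p * χ₁) *
        (ENNReal.ofReal (2 ^ (n + 2)) ^ (2 * χ₁ / σ)) ^ (q * χ₁))) ^ (1 / (1 - q * χ₁)), ?_, ?_⟩
  · have hh : 0 ≤ p * χ₁ := by positivity
    have hh' : 0 ≤ q * χ₁ := by positivity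
    have hh'' : 0 ≤ 2 * χ₁ / σ := by positivity
    refine ENNReal.rpow_ne_top_of_nonneg (by positivity) (ENNReal.mul_ne_top (by simp) ?_)
    refine ENNReal.mul_ne_top (ENNReal.mul_ne_top ?_ ?_) ?_
    · exact ENNReal.rpow_ne_top_of_nonneg hχ0.le ENNReal.ofReal_ne_top
    · exact ENNReal.rpow_ne_top_of_nonneg hh ENNReal.ofReal_ne_top
    · exact ENNReal.rpow_ne_top_of_nonneg hh'
        (ENNReal.rpow_ne_top_of_nonneg hh'' ENNReal.ofReal_ne_top)
  intro g hg x t ρ hρ hyp hfin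
  set Q := parabolicCylinder n x t ρ with hQ
  set Ψ : ℝ≥0∞ := ⨆ (z : {z : EuclideanSpace ℝ (Fin n) × ℝ × ℝ // 0 < z.2.2 ∧
    parabolicCylinder n z.1 z.2.1 z.2.2 ⊆ Q}),
      volume (parabolicCylinder n z.1.1 z.1.2.1 z.1.2.2) ^ (2 * χ₁ / σ) *
        cylAvg (parabolicCylinder n z.1.1 z.1.2.1 (z.1.2.2 / 2)) g (2 * χ₁) with hΨdef
  have hΨ : ∀ (x : EuclideanSpace ℝ (Fin n)) (t r : ℝ), 0 < r → parabolicCylinder n x t r ⊆ Q →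
      volume (parabolicCylinder n x t r) ^ (2 * χ₁ / σ) *
        cylAvg (parabolicCylinder n x t (r / 2)) g (2 * χ₁) ≤ Ψ := by
    intro y s r hr hsub
    exact le_iSup (fun (z : {z : EuclideanSpace ℝ (Fin n) × ℝ × ℝ // 0 < z.2.2 ∧
      parabolicCylinder n z.1 z.2.1 z.2.2 ⊆ Q}) =>
      volume (parabolicCylinder n z.1.1 z.1.2.1 z.1.2.2) ^ (2 * χ₁ / σ) *
        cylAvg (parabolicCylinder n z.1.1 z.1.2.1 (z.1.2.2 / 2)) g (2 * χ₁))
      ⟨(y, s, r), hr, hsub⟩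
  have hQtop : volume Q ≠ ∞ := pc_vol_ne_top n hn x t ρ hρ
  have hge : 0 ≤ 2 * χ₁ / σ - 1 := by
    rw [sub_nonneg, le_div_iff₀ hσ0]; linarith
  have hΨtop : Ψ ≠ ∞ := by
    refine ne_top_of_le_ne_top (b := volume Q ^ (2 * χ₁ / σ - 1) * (ENNReal.ofReal (2 ^ (n + 2)) *
      ∫⁻ y in Q, ENNReal.ofReal (|g y| ^ (2 * χ₁)))) ?_ ?_
    · exact ENNReal.mul_ne_top (ENNReal.rpow_ne_top_of_nonneg hge hQtop)
        (ENNReal.mul_ne_top ENNReal.ofReal_ne_top hfin)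
    · refine iSup_le ?_
      rintro ⟨⟨y, s, r⟩, hr, hsub⟩
      simp only at hr hsub ⊢
      have e1 : volume (parabolicCylinder n y s r) ^ (2 * χ₁ / σ) =
          volume (parabolicCylinder n y s r) ^ (2 * χ₁ / σ - 1) *
            volume (parabolicCylinder n y s r) := by
        conv_rhs => rw [← ENNReal.rpow_one (volume (parabolicCylinder n y s r)),
          ← ENNReal.rpow_mul, one_mul, ← ENNReal.rpow_add_of_nonneg _ _ hge zero_le_one]
        congr 1; ring
      have hsub2 : parabolicCylinder n y s (r / 2) ⊆ Q :=
        (pc_subset n y y s s (r / 2) r (by rw [dist_self]; linarith) le_rfl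
          (by nlinarith)).trans hsub
      rw [e1, mul_assoc]
      refine mul_le_mul' (ENNReal.rpow_le_rpow (measure_mono hsub) hge) ?_
      rw [pc_vol_scale n hn y y s s r 2 hr (by norm_num), mul_assoc,
        vol_mul_cylAvg _ _ _ (pc_vol_ne_zero n hn y s (r / 2) (by positivity))
          (pc_vol_ne_top n hn y s (r / 2) (by positivity))]
      gcongr
  have hstep := key_step n hn χ₁ cHat σ p q hχ hσ0 hp0 hq0 hpq he F hF Q g hg hyp Ψ hΨ
  have hle : Ψ ≤ (F.card * (ENNReal.ofReal cHat ^ χ₁ * ENNReal.ofReal (4 ^ (n + 2)) ^ (p * χ₁) *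
        (ENNReal.ofReal (2 ^ (n + 2)) ^ (2 * χ₁ / σ)) ^ (q * χ₁))) *
        (∫⁻ y in Q, ENNReal.ofReal (|g y| ^ σ)) ^ (p * χ₁) * Ψ ^ (q * χ₁) := by
    conv_lhs => rw [hΨdef]
    refine iSup_le ?_
    rintro ⟨⟨y, s, r⟩, hr, hsub⟩
    exact hstep y s r hr hsub
  have := absorb Ψ _ _ (q * χ₁) (p * χ₁) (by linarith) hΨtop hle
  rw [hexp] at this
  exact (hΨ x t ρ hρ le_rfl).trans this

lemma core2 (n : ℕ) (hn : 2 ≤ n) (χ₁ cHat σ : ℝ) (hχ : 1 < χ₁) (hσ0 : 0 < σ) (hσ2 : σ ≤ 2) :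
    ∃ K : ℝ≥0∞, K ≠ ∞ ∧ ∀ A : Set (EuclideanSpace ℝ (Fin n) × ℝ),
      ∀ g : EuclideanSpace ℝ (Fin n) × ℝ → ℝ, Measurable g →
      LocallyIntegrableOn (fun p => |g p| ^ (2 * χ₁)) A volume →
      (∀ (y : EuclideanSpace ℝ (Fin n)) (s r : ℝ), 0 < r →
          parabolicCylinder n y s r ⊆ A →
            cylAvg (parabolicCylinder n y s (r / 2)) g (2 * χ₁) ^ (1 / χ₁) ≤
              ENNReal.ofReal cHat * cylAvg (parabolicCylinder n y s r) g 2) →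
      ∀ (x : EuclideanSpace ℝ (Fin n)) (t ρ : ℝ), 0 < ρ → parabolicCylinder n x t ρ ⊆ A →
      volume (parabolicCylinder n x t ρ) ^ (2 * χ₁ / σ) *
        cylAvg (parabolicCylinder n x t (ρ / 2)) g (2 * χ₁) ≤
      K * (∫⁻ y in parabolicCylinder n x t ρ, ENNReal.ofReal (|g y| ^ σ)) ^ (2 * χ₁ / σ) := by
  obtain ⟨K, hK, hmain⟩ := core n hn χ₁ cHat σ hχ hσ0 hσ2
  have hb : 0 ≤ 2 * χ₁ / σ := div_nonneg (by linarith) hσ0.le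
  refine ⟨ENNReal.ofReal (2 ^ (n + 2)) ^ (2 * χ₁ / σ) * K, ENNReal.mul_ne_top
    (ENNReal.rpow_ne_top_of_nonneg hb ENNReal.ofReal_ne_top) hK, ?_⟩
  intro A g hg hloc hyp x t ρ hρ hA
  -- approximating cylinders
  let ε : ℕ → ℝ := fun k => 1 / ((k : ℝ) + 2)
  have hε0 : ∀ k, 0 < ε k := fun k => by positivity
  have hε1 : ∀ k, ε k ≤ 1 / 2 := fun k => by
    apply one_div_le_one_div_of_le (by norm_num)
    have : (0 : ℝ) ≤ k := by positivity
    linarith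
  have hεanti : ∀ i j, i ≤ j → ε j ≤ ε i := fun i j hij => by
    apply one_div_le_one_div_of_le (by positivity)
    have : (i : ℝ) ≤ j := by exact_mod_cast hij
    linarith
  have hρ2 : 0 < ρ ^ 2 := by positivity
  let T : ℕ → ℝ := fun k => t - ε k / 4 * ρ ^ 2
  let R : ℕ → ℝ := fun k => ρ * (1 - ε k)
  have hR0 : ∀ k, 0 < R k := fun k => mul_pos hρ (by linarith [hε1 k])
  have hRle : ∀ k, R k ≤ ρ := fun k => by
    have := hε0 k
    simp only [R]; nlinarith
  have hRge : ∀ k, ρ / 2 ≤ R k := fun k => by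
    have := hε1 k
    simp only [R]; nlinarith
  have hclosed : ∀ k, Metric.closedBall x (R k) ×ˢ Set.Icc (T k - R k ^ 2) (T k) ⊆
      parabolicCylinder n x t ρ := by
    intro k
    have h0 := hε0 k
    have h1 := hε1 k
    apply Set.prod_mono
    · apply Metric.closedBall_subset_ball
      simp only [R]; nlinarith
    · apply Set.Icc_subset_Ioo
      · simp only [R, T]
        have : 0 < ρ ^ 2 * (1 - ε k / 4 - (1 - ε k) ^ 2) := by
          apply mul_pos hρ2; nlinarith
        nlinarith
      · simp only [T]
        have : 0 < ε k / 4 * ρ ^ 2 := by positivity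
        linarith
  have hsubcl : ∀ k, parabolicCylinder n x (T k) (R k) ⊆
      Metric.closedBall x (R k) ×ˢ Set.Icc (T k - R k ^ 2) (T k) := fun k =>
    Set.prod_mono Metric.ball_subset_closedBall Set.Ioo_subset_Icc_self
  have hsub : ∀ k, parabolicCylinder n x (T k) (R k) ⊆ parabolicCylinder n x t ρ :=
    fun k => (hsubcl k).trans (hclosed k)
  have hfin : ∀ k, ∫⁻ y in parabolicCylinder n x (T k) (R k),
      ENNReal.ofReal (|g y| ^ (2 * χ₁)) ≠ ∞ := by
    intro k
    have hc : IsCompact (Metric.closedBall x (R k) ×ˢ Set.Icc (T k - R k ^ 2) (T k)) :=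
      (isCompact_closedBall _ _).prod isCompact_Icc
    have hi := (hloc.integrableOn_compact_subset ((hclosed k).trans hA) hc).mono_set (hsubcl k)
    exact hi.lintegral_lt_top.ne
  have hmono : Monotone (fun k => parabolicCylinder n x (T k) (R k / 2)) := by
    intro i j hij
    have h1 := hεanti i j hij
    have h2 := hε1 i
    apply pc_subset
    · rw [dist_self]; simp only [R]; nlinarith
    · simp only [T]; nlinarith
    · simp only [R, T]
      have : 0 ≤ ρ ^ 2 * ((ε i - ε j) * (1 - ε i - ε j)) :=
        mul_nonneg hρ2.le (mul_nonneg (by linarith) (by linarith))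
      nlinarith
  have hunion : parabolicCylinder n x t (ρ / 2) ⊆
      ⋃ k, parabolicCylinder n x (T k) (R k / 2) := by
    rintro ⟨y, τ⟩ ⟨hy, hτ⟩
    simp only [Metric.mem_ball, mem_Ioo] at hy hτ
    have hlim : Filter.Tendsto ε Filter.atTop (nhds 0) := by
      have := (tendsto_one_div_add_atTop_nhds_zero_nat (𝕜 := ℝ)).comp
        (Filter.tendsto_add_atTop_nat 1)
      refine this.congr fun k => ?_
      simp only [Function.comp, ε]
      push_cast
      ring
    have hT : Filter.Tendsto T Filter.atTop (nhds t) := by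
      have : Filter.Tendsto T Filter.atTop (nhds (t - 0 / 4 * ρ ^ 2)) :=
        tendsto_const_nhds.sub ((hlim.div_const 4).mul_const _)
      simpa using this
    have hR : Filter.Tendsto R Filter.atTop (nhds ρ) := by
      have : Filter.Tendsto R Filter.atTop (nhds (ρ * (1 - 0))) :=
        tendsto_const_nhds.mul (tendsto_const_nhds.sub hlim)
      simpa using this
    have e1 := (hR.div_const 2).eventually_const_lt hy
    have e2 := hT.eventually_const_lt hτ.2
    have e3 := (hT.sub ((hR.div_const 2).pow 2)).eventually_lt_const hτ.1
    obtain ⟨k, h1, h2, h3⟩ := (e1.and (e2.and e3)).exists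
    exact mem_iUnion.2 ⟨k, h1, h3, h2⟩
  set m := volume (parabolicCylinder n x t ρ) with hm
  set I := ∫⁻ y in parabolicCylinder n x t ρ, ENNReal.ofReal (|g y| ^ σ) with hI
  have hk : ∀ k, m ^ (2 * χ₁ / σ) * ((volume (parabolicCylinder n x t (ρ / 2)))⁻¹ *
      ∫⁻ y in parabolicCylinder n x (T k) (R k / 2), ENNReal.ofReal (|g y| ^ (2 * χ₁))) ≤
      ENNReal.ofReal (2 ^ (n + 2)) ^ (2 * χ₁ / σ) * K * I ^ (2 * χ₁ / σ) := by
    intro k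
    have hmk := hmain g hg x (T k) (R k) (hR0 k)
      (fun y s r hr h => hyp y s r hr (h.trans ((hsub k).trans hA))) (hfin k)
    unfold cylAvg at hmk
    have hm1 : m ≤ ENNReal.ofReal (2 ^ (n + 2)) * volume (parabolicCylinder n x (T k) (R k)) := by
      rw [hm, pc_vol_scale n hn x x t t ρ 2 hρ (by norm_num),
        pc_vol n hn x t (ρ / 2) (by positivity), pc_vol n hn x _ (R k) (hR0 k)]
      gcongr
      exact hRge k
    have hm2 : (volume (parabolicCylinder n x t (ρ / 2)))⁻¹ ≤
        (volume (parabolicCylinder n x (T k) (R k / 2)))⁻¹ := by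
      have := hR0 k
      rw [pc_vol n hn x t (ρ / 2) (by positivity), pc_vol n hn x _ (R k / 2) (by positivity)]
      gcongr
      exact hRle k
    calc _ ≤ (ENNReal.ofReal (2 ^ (n + 2)) * volume (parabolicCylinder n x (T k) (R k))) ^
            (2 * χ₁ / σ) * ((volume (parabolicCylinder n x (T k) (R k / 2)))⁻¹ *
          ∫⁻ y in parabolicCylinder n x (T k) (R k / 2), ENNReal.ofReal (|g y| ^ (2 * χ₁))) := by
          gcongr
      _ ≤ ENNReal.ofReal (2 ^ (n + 2)) ^ (2 * χ₁ / σ) *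
          (K * (∫⁻ y in parabolicCylinder n x (T k) (R k), ENNReal.ofReal (|g y| ^ σ)) ^
            (2 * χ₁ / σ)) := by
          rw [ENNReal.mul_rpow_of_nonneg _ _ hb, mul_assoc]
          gcongr
      _ ≤ _ := by
          rw [← mul_assoc]
          gcongr
          exact lintegral_mono_set (hsub k)
  unfold cylAvg
  calc _ ≤ m ^ (2 * χ₁ / σ) * ((volume (parabolicCylinder n x t (ρ / 2)))⁻¹ *
        ∫⁻ y in ⋃ k, parabolicCylinder n x (T k) (R k / 2),
          ENNReal.ofReal (|g y| ^ (2 * χ₁))) := by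
        gcongr
    _ ≤ _ := by
        rw [setLIntegral_iUnion_of_directed _ hmono.directed_le, ENNReal.mul_iSup,
          ENNReal.mul_iSup]
        exact iSup_le hk

/-- **self-improving property of reverse Hölder inequalities.** If `g` is
measurable on an open `A ⊆ ℝ^{n+1}` with `|g|^{2χ₁}` locally integrable, `χ₁ > 1`, `cHat ≥ 1`,
and `(⨍_{Q_{ρ/2}} |g|^{2χ₁})^{1/χ₁} ≤ cHat ⨍_{Q_ρ} |g|²` for all parabolic cylinders
`Q_ρ ⊆ A`, then for every `σ ∈ (0,2]` there is `c = c(n,σ,χ₁,cHat)` such that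
`(⨍_{Q_{ρ/2}} |g|^{2χ₁})^{1/(2χ₁)} ≤ c (⨍_{Q_ρ} |g|^σ)^{1/σ}` for all parabolic cylinders
`Q_ρ ⊆ A`. -/
theorem reverse_holder_self_improving (n : ℕ) (hn : 2 ≤ n) (χ₁ cHat σ : ℝ)
    (hχ : 1 < χ₁) (hcHat : 1 ≤ cHat) (hσ0 : 0 < σ) (hσ2 : σ ≤ 2) :
    ∃ c : ℝ, 0 < c ∧
      ∀ A : Set (EuclideanSpace ℝ (Fin n) × ℝ), IsOpen A →
      ∀ g : EuclideanSpace ℝ (Fin n) × ℝ → ℝ, Measurable g →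
        LocallyIntegrableOn (fun p => |g p| ^ (2 * χ₁)) A volume →
        (∀ (x : EuclideanSpace ℝ (Fin n)) (t ρ : ℝ), 0 < ρ →
          parabolicCylinder n x t ρ ⊆ A →
            cylAvg (parabolicCylinder n x t (ρ / 2)) g (2 * χ₁) ^ (1 / χ₁) ≤
              ENNReal.ofReal cHat * cylAvg (parabolicCylinder n x t ρ) g 2) →
        ∀ (x : EuclideanSpace ℝ (Fin n)) (t ρ : ℝ), 0 < ρ →
          parabolicCylinder n x t ρ ⊆ A →
            cylAvg (parabolicCylinder n x t (ρ / 2)) g (2 * χ₁) ^ (1 / (2 * χ₁)) ≤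
              ENNReal.ofReal c * cylAvg (parabolicCylinder n x t ρ) g σ ^ (1 / σ) := by
  obtain ⟨K, hK, hmain⟩ := core2 n hn χ₁ cHat σ hχ hσ0 hσ2
  have hχ0 : 0 < χ₁ := by linarith
  have hK' : K ^ (1 / (2 * χ₁)) ≠ ∞ := ENNReal.rpow_ne_top_of_nonneg (by positivity) hK
  refine ⟨(K ^ (1 / (2 * χ₁))).toReal + 1, by positivity, ?_⟩
  intro A _ g hg hloc hyp x t ρ hρ hA
  have h := hmain A g hg hloc hyp x t ρ hρ hA
  have hv0 := pc_vol_ne_zero n hn x t ρ hρ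
  have hv1 := pc_vol_ne_top n hn x t ρ hρ
  rw [← vol_mul_cylAvg _ _ _ hv0 hv1] at h
  set m := volume (parabolicCylinder n x t ρ) with hm
  have hb : 0 ≤ 2 * χ₁ / σ := by positivity
  rw [ENNReal.mul_rpow_of_nonneg _ _ hb, mul_left_comm,
    ENNReal.mul_le_mul_iff_right (ENNReal.rpow_pos (pos_iff_ne_zero.2 hv0) hv1).ne'
      (ENNReal.rpow_ne_top_of_nonneg hb hv1)] at h
  have h' := ENNReal.rpow_le_rpow h (z := 1 / (2 * χ₁)) (by positivity)
  rw [ENNReal.mul_rpow_of_nonneg _ _ (by positivity), ← ENNReal.rpow_mul,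
    show 2 * χ₁ / σ * (1 / (2 * χ₁)) = 1 / σ by field_simp] at h'
  refine h'.trans ?_
  gcongr
  rw [← ENNReal.ofReal_toReal hK']
  apply ENNReal.ofReal_le_ofReal
  rw [ENNReal.toReal_ofReal ENNReal.toReal_nonneg]
  linarith
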